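/- A gentle quiver 𝚫 is of tree type if and only if f_𝚫 = [p+2, p] for some p ∈ ℕ. -/

import Mathlib

/-! Common formalization infrastructure for gentle quivers (Bobinski–Buan,
    "Derived equivalence classification of gentle cluster tilted algebras"). -/

/-- A (finite) quiver with (length-two, monomial) relations.  Vertices and
arrows are natural numbers; `V` and `A` are the finite sets of vertices and
arrows, `src`/`tgt` give the start and terminus of each arrow, and `rel` is the
set of relations, a relation `(a, b)` standing for the length-two path
`a·b` (so `src a = tgt b`). -/
structure QuivRel where
  V : Finset ℕ
  A : Finset ℕ
  src : ℕ → ℕ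
  tgt : ℕ → ℕ
  rel : Finset (ℕ × ℕ)

namespace GentleQuiv

/-- Two vertices are adjacent if some arrow joins them (in either direction). -/
def Adj (Q : QuivRel) (x y : ℕ) : Prop :=
  ∃ a ∈ Q.A, (Q.src a = x ∧ Q.tgt a = y) ∨ (Q.src a = y ∧ Q.tgt a = x)

/-- A quiver is connected if any two of its vertices are joined by a walk. -/
def Connected (Q : QuivRel) : Prop :=
  ∀ x ∈ Q.V, ∀ y ∈ Q.V, Relation.ReflTransGen (Adj Q) x y

/-- `l = [α₁, …, αₙ]` is a (nonempty) path in the quiver: consecutive arrows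
compose, i.e. `s αᵢ = t αᵢ₊₁`. -/
def IsPathList (Q : QuivRel) (l : List ℕ) : Prop :=
  l ≠ [] ∧ (∀ a ∈ l, a ∈ Q.A) ∧ l.Chain' (fun a b => Q.src a = Q.tgt b)

/-- The path `l` contains a subpath (two consecutive arrows) lying in `R`. -/
def HasRelSubpath (Q : QuivRel) (l : List ℕ) : Prop :=
  ∃ a b, (a, b) ∈ Q.rel ∧ [a, b] <:+: l

/-- Gentle quiver: connected, relations are composable pairs of arrows, at most
two arrows in/out of every vertex, the usual gentleness conditions on
relations, and a global bound forcing finite dimensionality. -/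
def IsGentle (Q : QuivRel) : Prop :=
  Q.V.Nonempty ∧
  (∀ a ∈ Q.A, Q.src a ∈ Q.V ∧ Q.tgt a ∈ Q.V) ∧
  Connected Q ∧
  (∀ ρ ∈ Q.rel, ρ.1 ∈ Q.A ∧ ρ.2 ∈ Q.A ∧ Q.src ρ.1 = Q.tgt ρ.2) ∧
  (∀ x, (Q.A.filter fun a => Q.src a = x).card ≤ 2) ∧
  (∀ x, (Q.A.filter fun a => Q.tgt a = x).card ≤ 2) ∧
  (∀ a ∈ Q.A, (Q.A.filter fun b => Q.src b = Q.tgt a ∧ (b, a) ∉ Q.rel).card ≤ 1) ∧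
  (∀ a ∈ Q.A, (Q.A.filter fun c => Q.tgt c = Q.src a ∧ (a, c) ∉ Q.rel).card ≤ 1) ∧
  (∀ a ∈ Q.A, (Q.A.filter fun b => (b, a) ∈ Q.rel).card ≤ 1) ∧
  (∀ a ∈ Q.A, (Q.A.filter fun c => (a, c) ∈ Q.rel).card ≤ 1) ∧
  (∃ n : ℕ, ∀ l : List ℕ, IsPathList Q l → l.length = n → HasRelSubpath Q l)

/-- A choice of functions `σ, τ : Δ₁ → {±1}` as in Avella-Alaminos–Geiss. -/
structure SigmaTau (Q : QuivRel) where
  σ : ℕ → ℤ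
  τ : ℕ → ℤ
  σ_pm : ∀ a ∈ Q.A, σ a = 1 ∨ σ a = -1
  τ_pm : ∀ a ∈ Q.A, τ a = 1 ∨ τ a = -1
  σ_src : ∀ a ∈ Q.A, ∀ b ∈ Q.A, a ≠ b → Q.src a = Q.src b → σ a = -σ b
  τ_tgt : ∀ a ∈ Q.A, ∀ b ∈ Q.A, a ≠ b → Q.tgt a = Q.tgt b → τ a = -τ b
  rel_iff : ∀ a ∈ Q.A, ∀ b ∈ Q.A, Q.src a = Q.tgt b → ((a, b) ∈ Q.rel ↔ σ a = τ b)

/-- A thread: either a trivial path/antipath `1_{x,ε}` at a vertex `x` with a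
sign `ε`, or a sequence of arrows of positive length. -/
inductive Thread where
  | triv (x : ℕ) (ε : ℤ) : Thread
  | arrows (l : List ℕ) : Thread
deriving DecidableEq

/-- Source of a thread. -/
def Thread.source (Q : QuivRel) : Thread → ℕ
  | .triv x _ => x
  | .arrows l => Q.src l.getLast!

/-- Target of a thread. -/
def Thread.target (Q : QuivRel) : Thread → ℕ
  | .triv x _ => x
  | .arrows l => Q.tgt l.head!

/-- `σω` (for paths and antipaths alike; `σ 1_{x,ε} = ε = σ 1'_{x,ε}`). -/
def Thread.sigma {Q : QuivRel} (st : SigmaTau Q) : Thread → ℤ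
  | .triv _ ε => ε
  | .arrows l => st.σ l.getLast!

/-- `τω` when `ω` is regarded as a path (`τ 1_{x,ε} = -ε`). -/
def Thread.tauPath {Q : QuivRel} (st : SigmaTau Q) : Thread → ℤ
  | .triv _ ε => -ε
  | .arrows l => st.τ l.head!

/-- `τω` when `ω` is regarded as an antipath (`τ 1'_{x,ε} = ε`). -/
def Thread.tauAnti {Q : QuivRel} (st : SigmaTau Q) : Thread → ℤ
  | .triv _ ε => ε
  | .arrows l => st.τ l.head!

/-- Length of a thread. -/
def Thread.len : Thread → ℕ
  | .triv _ _ => 0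
  | .arrows l => l.length

/-- A path in `𝚫` of positive length (no two consecutive arrows in `R`). -/
def IsPermList (Q : QuivRel) (l : List ℕ) : Prop :=
  IsPathList Q l ∧ l.Chain' (fun a b => (a, b) ∉ Q.rel)

/-- An antipath in `𝚫` of positive length (all consecutive pairs in `R`). -/
def IsAntiList (Q : QuivRel) (l : List ℕ) : Prop :=
  l ≠ [] ∧ (∀ a ∈ l, a ∈ Q.A) ∧ l.Chain' (fun a b => (a, b) ∈ Q.rel)

/-- A thread is a path in `𝚫` (including trivial ones). -/
def IsPathThread (Q : QuivRel) : Thread → Prop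
  | .triv x ε => x ∈ Q.V ∧ (ε = 1 ∨ ε = -1)
  | .arrows l => IsPermList Q l

/-- A thread is an antipath in `𝚫` (including trivial ones). -/
def IsAntiThread (Q : QuivRel) : Thread → Prop
  | .triv x ε => x ∈ Q.V ∧ (ε = 1 ∨ ε = -1)
  | .arrows l => IsAntiList Q l

/-- `w ∈ ℳ`: `w` is a maximal path of `𝚫`. -/
def InM (Q : QuivRel) (st : SigmaTau Q) (w : Thread) : Prop :=
  IsPathThread Q w ∧
  (¬ ∃ a ∈ Q.A, Q.src a = w.target Q ∧ st.σ a = -(w.tauPath st)) ∧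
  (¬ ∃ b ∈ Q.A, Q.tgt b = w.source Q ∧ st.τ b = -(w.sigma st))

/-- `w ∈ 𝒩`: `w` is a maximal antipath of `𝚫`. -/
def InN (Q : QuivRel) (st : SigmaTau Q) (w : Thread) : Prop :=
  IsAntiThread Q w ∧
  (¬ ∃ a ∈ Q.A, Q.src a = w.target Q ∧ st.σ a = w.tauAnti st) ∧
  (¬ ∃ b ∈ Q.A, Q.tgt b = w.source Q ∧ st.τ b = w.sigma st)

/-- The graph of the bijection `Φ = φ ∘ ψ : 𝒩 → 𝒩`:  `PhiRel Q st w w'` holds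
iff `w, w' ∈ 𝒩` and the maximal path `ψ w` (with `s(ψw) = sw`, `σ(ψw) = -σw`)
satisfies `t w' = t (ψ w)` and `τ w' = -τ(ψ w)`, i.e. `w' = φ (ψ w) = Φ w`. -/
def PhiRel (Q : QuivRel) (st : SigmaTau Q) (w w' : Thread) : Prop :=
  InN Q st w ∧ InN Q st w' ∧
  ∃ m : Thread, InM Q st m ∧
    m.source Q = w.source Q ∧ m.sigma st = -(w.sigma st) ∧
    w'.target Q = m.target Q ∧ w'.tauAnti st = -(m.tauPath st)

/-- `O` is an orbit of the `ℤ`-action on `𝒩` induced by `Φ`. -/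
def NOrbit (Q : QuivRel) (st : SigmaTau Q) (O : Set Thread) : Prop :=
  ∃ w, InN Q st w ∧ O = {w' | Relation.EqvGen (PhiRel Q st) w w'}

/-- `p(𝒪) = |𝒪|` for an orbit `𝒪 ∈ 𝒩/ℤ`. -/
noncomputable def pN (O : Set Thread) : ℕ := O.ncard

/-- `q(𝒪) = Σ_{ω ∈ 𝒪} ℓ(ω)` for an orbit `𝒪 ∈ 𝒩/ℤ`. -/
noncomputable def qN (O : Set Thread) : ℕ := ∑ᶠ w ∈ O, Thread.len w

/-- `a ∈ 𝒞`: the arrow `a` occurs in no maximal antipath. -/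
def InC (Q : QuivRel) (st : SigmaTau Q) (a : ℕ) : Prop :=
  a ∈ Q.A ∧ ¬ ∃ l : List ℕ, InN Q st (.arrows l) ∧ a ∈ l

/-- The graph of the bijection `Ψ : 𝒞 → 𝒞`. -/
def PsiRel (Q : QuivRel) (st : SigmaTau Q) (a b : ℕ) : Prop :=
  InC Q st a ∧ InC Q st b ∧ Q.tgt b = Q.src a ∧ st.τ b = st.σ a

/-- `O` is an orbit of the `ℤ`-action on `𝒞` induced by `Ψ`. -/
def COrbit (Q : QuivRel) (st : SigmaTau Q) (O : Set ℕ) : Prop :=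
  ∃ a, InC Q st a ∧ O = {b | Relation.EqvGen (PsiRel Q st) a b}

/-- The Avella-Alaminos–Geiss invariant `f_𝚫 : ℕ² → ℕ`:  `f_𝚫 (p,q)` counts the
orbits `𝒪 ∈ 𝒩/ℤ ⊔ 𝒞/ℤ` with `p(𝒪) = p` and `q(𝒪) = q`. -/
noncomputable def fInv (Q : QuivRel) (st : SigmaTau Q) : ℕ × ℕ → ℕ := fun pq =>
  {O : Set Thread | NOrbit Q st O ∧ pN O = pq.1 ∧ qN O = pq.2}.ncard +
  {O : Set ℕ | COrbit Q st O ∧ pq.1 = 0 ∧ O.ncard = pq.2}.ncard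

/-- `[p, q] : ℕ² → ℕ`, the characteristic function of `{(p, q)}`. -/
def charFn (p q : ℕ) : ℕ × ℕ → ℕ := fun pq => if pq = (p, q) then 1 else 0

/-- Tree type: `|Δ₀| = |Δ₁| + 1`. -/
def TreeType (Q : QuivRel) : Prop := Q.V.card = Q.A.card + 1

/-- Removing a set of arrows (keeping all vertices); relations containing a
removed arrow are discarded. -/
def deleteArrows (Q : QuivRel) (S : Finset ℕ) : QuivRel where
  V := Q.V
  A := Q.A \ S
  src := Q.src
  tgt := Q.tgt
  rel := Q.rel.filter fun ρ => ρ.1 ∉ S ∧ ρ.2 ∉ S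

/-- Branch arrow: removing it disconnects the quiver. -/
def BranchArrow (Q : QuivRel) (a : ℕ) : Prop :=
  a ∈ Q.A ∧ ¬ Connected (deleteArrows Q {a})

/-- Cycle arrow: removing it leaves the quiver connected. -/
def CycleArrow (Q : QuivRel) (a : ℕ) : Prop :=
  a ∈ Q.A ∧ Connected (deleteArrows Q {a})

/-- Branch relation: a relation one of whose arrows is a branch arrow. -/
def BranchRel (Q : QuivRel) (ρ : ℕ × ℕ) : Prop :=
  ρ ∈ Q.rel ∧ (BranchArrow Q ρ.1 ∨ BranchArrow Q ρ.2)

/-- A relation `ρ = (α, β)` is isolated if the antipath `(α, β)` is a maximal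
antipath, i.e. `ρ ∈ 𝒩`. -/
def Isolated (Q : QuivRel) (st : SigmaTau Q) (ρ : ℕ × ℕ) : Prop :=
  ρ ∈ Q.rel ∧ InN Q st (.arrows [ρ.1, ρ.2])

/-- `Q'` is obtained from `Q` by completing the relations from `R₀`, the new
arrow attached to `ρ ∈ R₀` being `γ ρ`. -/
structure IsCompletion (Q : QuivRel) (R0 : Finset (ℕ × ℕ)) (γ : ℕ × ℕ → ℕ)
    (Q' : QuivRel) : Prop where
  subset : R0 ⊆ Q.rel
  fresh : ∀ ρ ∈ R0, γ ρ ∉ Q.A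
  inj : ∀ ρ ∈ R0, ∀ ρ' ∈ R0, γ ρ = γ ρ' → ρ = ρ'
  V_eq : Q'.V = Q.V
  A_eq : Q'.A = Q.A ∪ R0.image γ
  src_old : ∀ a ∈ Q.A, Q'.src a = Q.src a
  tgt_old : ∀ a ∈ Q.A, Q'.tgt a = Q.tgt a
  src_new : ∀ ρ ∈ R0, Q'.src (γ ρ) = Q.tgt ρ.1
  tgt_new : ∀ ρ ∈ R0, Q'.tgt (γ ρ) = Q.src ρ.2
  rel_eq : Q'.rel = Q.rel ∪ R0.image (fun ρ => (γ ρ, ρ.1)) ∪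
      R0.image (fun ρ => (ρ.2, γ ρ))

/-- A 3-cycle: three pairwise distinct arrows forming an oriented cycle. -/
def Is3Cycle (Q : QuivRel) (a0 a1 a2 : ℕ) : Prop :=
  a0 ∈ Q.A ∧ a1 ∈ Q.A ∧ a2 ∈ Q.A ∧ a0 ≠ a1 ∧ a1 ≠ a2 ∧ a0 ≠ a2 ∧
  Q.src a0 = Q.tgt a1 ∧ Q.src a1 = Q.tgt a2 ∧ Q.src a2 = Q.tgt a0

/-- A triangle: a 3-cycle all of whose three compositions are relations. -/
def IsTriangleTriple (Q : QuivRel) (a0 a1 a2 : ℕ) : Prop :=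
  Is3Cycle Q a0 a1 a2 ∧ (a0, a1) ∈ Q.rel ∧ (a1, a2) ∈ Q.rel ∧ (a2, a0) ∈ Q.rel

/-- The (unordered) set of arrows of a triangle. -/
def TriangleSet (Q : QuivRel) (O : Finset ℕ) : Prop :=
  ∃ a0 a1 a2, O = {a0, a1, a2} ∧ IsTriangleTriple Q a0 a1 a2

/-- Branch triangle: removing any two of its arrows disconnects the quiver. -/
def BranchTriangle (Q : QuivRel) (O : Finset ℕ) : Prop :=
  TriangleSet Q O ∧ ∀ S ⊆ O, S.card = 2 → ¬ Connected (deleteArrows Q S)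

/-- Free relation: a relation neither of whose arrows lies in `𝒞`. -/
def FreeRel (Q : QuivRel) (st : SigmaTau Q) (ρ : ℕ × ℕ) : Prop :=
  ρ ∈ Q.rel ∧ ¬ InC Q st ρ.1 ∧ ¬ InC Q st ρ.2

/-- The class `𝒜`: gentle quivers with `f_𝚫 = m·[0,3] + [p+m+2, p]`. -/
def ClassA (Q : QuivRel) (st : SigmaTau Q) : Prop :=
  IsGentle Q ∧ ∃ m p : ℕ, ∀ x, fInv Q st x = m * charFn 0 3 x + charFn (p + m + 2) p x

/-- The class `Ã`: gentle quivers with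
`f_𝚫 = (m₁+m₂)·[0,3] + [p+m₁, p] + [q+m₂, q]`, `p+m₁ > 0`, `q+m₂ > 0`. -/
def ClassAtilde (Q : QuivRel) (st : SigmaTau Q) : Prop :=
  IsGentle Q ∧ ∃ m1 m2 p q : ℕ, 0 < p + m1 ∧ 0 < q + m2 ∧
    ∀ x, fInv Q st x =
      (m1 + m2) * charFn 0 3 x + charFn (p + m1) p x + charFn (q + m2) q x

/-- Isomorphism of quivers with relations. -/
def IsoQR (Q Q' : QuivRel) : Prop :=
  ∃ fV fA : ℕ → ℕ,
    Set.BijOn fV ↑Q.V ↑Q'.V ∧ Set.BijOn fA ↑Q.A ↑Q'.A ∧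
    (∀ a ∈ Q.A, Q'.src (fA a) = fV (Q.src a) ∧ Q'.tgt (fA a) = fV (Q.tgt a)) ∧
    (∀ a ∈ Q.A, ∀ b ∈ Q.A, ((a, b) ∈ Q.rel ↔ (fA a, fA b) ∈ Q'.rel))

/-- The quiver has no loops. -/
def NoLoops (Q : QuivRel) : Prop := ∀ a ∈ Q.A, Q.src a ≠ Q.tgt a

/-- The reflection at `x` is defined: every arrow starting at `x` admits a
(necessarily unique) companion arrow ending at `x` not bound by a relation. -/
def CanReflect (Q : QuivRel) (x : ℕ) : Prop :=
  x ∈ Q.V ∧ ∀ a ∈ Q.A, Q.src a = x → ∃ b ∈ Q.A, Q.tgt b = x ∧ (a, b) ∉ Q.rel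

/-- `Q'` is the reflection of the gentle loop-free quiver `Q` at the vertex
`x`, following Brenner–Butler tilting. -/
def IsReflection (Q : QuivRel) (x : ℕ) (Q' : QuivRel) : Prop :=
  IsGentle Q ∧ NoLoops Q ∧ CanReflect Q x ∧
  Q'.V = Q.V ∧ Q'.A = Q.A ∧
  (∀ a ∈ Q.A, Q.tgt a = x → Q'.src a = x ∧ Q'.tgt a = Q.src a) ∧
  (∀ a ∈ Q.A, Q.src a = x →
    ∀ b ∈ Q.A, Q.tgt b = x → (a, b) ∉ Q.rel → Q'.src a = Q.src b) ∧
  (∀ a ∈ Q.A, Q.tgt a ≠ x → Q.src a ≠ x → Q'.src a = Q.src a) ∧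
  (∀ a ∈ Q.A, Q.tgt a ≠ x →
    ((∃ b ∈ Q.A, Q.tgt b = x ∧ Q.src b = Q.tgt a ∧ (b, a) ∈ Q.rel) → Q'.tgt a = x) ∧
    ((¬ ∃ b ∈ Q.A, Q.tgt b = x ∧ Q.src b = Q.tgt a ∧ (b, a) ∈ Q.rel) →
      Q'.tgt a = Q.tgt a)) ∧
  (∀ a b : ℕ, (a, b) ∈ Q'.rel ↔
    (((a, b) ∈ Q.rel ∧ Q.tgt a ≠ x ∧ Q.src a ≠ x) ∨
     (a ∈ Q.A ∧ b ∈ Q.A ∧ Q.src a = x ∧ Q.tgt b = x ∧ (a, b) ∉ Q.rel) ∨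
     (a ∈ Q.A ∧ b ∈ Q.A ∧ Q.tgt a = x ∧
       ∃ c ∈ Q.A, c ≠ a ∧ Q.tgt c = x ∧ Q.src c = Q.tgt b ∧ (c, b) ∈ Q.rel)))

/-- The opposite quiver with relations. -/
def opQR (Q : QuivRel) : QuivRel where
  V := Q.V
  A := Q.A
  src := Q.tgt
  tgt := Q.src
  rel := Q.rel.image fun ρ => (ρ.2, ρ.1)

/-- Coreflection: the dual of reflection. -/
def IsCoreflection (Q : QuivRel) (x : ℕ) (Q' : QuivRel) : Prop :=
  IsReflection (opQR Q) x (opQR Q')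

/-- One step of reflection equivalence: a reflection, a coreflection, or an
isomorphism of quivers with relations. -/
def RefStep (Q Q' : QuivRel) : Prop :=
  (∃ x, IsReflection Q x Q') ∨ (∃ x, IsCoreflection Q x Q') ∨ IsoQR Q Q'

/-- Reflection equivalence: a finite sequence of reflections/coreflections,
up to isomorphism of quivers with relations. -/
def RefEquiv : QuivRel → QuivRel → Prop := Relation.ReflTransGen RefStep

/-- A cyclic orientation of a `1`-cycle quiver without branch arrows (i.e. a
cycle): enumerations of the vertices and arrows by `ZMod n` such that the
`i`-th arrow joins the `i`-th and `(i+1)`-st vertices. -/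
structure CyclicOrientation (Q : QuivRel) (n : ℕ) where
  ev : ZMod n → ℕ
  ea : ZMod n → ℕ
  ev_mem : ∀ i, ev i ∈ Q.V
  ea_mem : ∀ i, ea i ∈ Q.A
  ev_inj : Function.Injective ev
  ea_inj : Function.Injective ea
  ev_surj : ∀ v ∈ Q.V, ∃ i, ev i = v
  ea_surj : ∀ a ∈ Q.A, ∃ i, ea i = a
  compat : ∀ i : ZMod n,
    (Q.src (ea i) = ev i ∧ Q.tgt (ea i) = ev (i + 1)) ∨
    (Q.src (ea i) = ev (i + 1) ∧ Q.tgt (ea i) = ev i)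

/-- Clockwise arrow with respect to a cyclic orientation. -/
def Clockwise (Q : QuivRel) {n : ℕ} (co : CyclicOrientation Q n) (a : ℕ) : Prop :=
  a ∈ Q.A ∧ ∃ i : ZMod n, co.ea i = a ∧ Q.src a = co.ev i ∧ Q.tgt a = co.ev (i + 1)

/-- Anticlockwise arrow with respect to a cyclic orientation. -/
def Anticlockwise (Q : QuivRel) {n : ℕ} (co : CyclicOrientation Q n) (a : ℕ) : Prop :=
  a ∈ Q.A ∧ ∃ i : ZMod n, co.ea i = a ∧ Q.src a = co.ev (i + 1) ∧ Q.tgt a = co.ev i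

end GentleQuiv

/-!
Every maximal antipath starts at a side (a vertex with a sign) that is not the side `(tα, τα)` of
an arrow, and each of the `2|Δ₀| - |Δ₁|` such sides is the start of exactly one, so
`|𝒩| + |Δ₁| = 2|Δ₀|`. An arrow lies in exactly one maximal antipath or in `𝒞`, so
`∑ ℓ(ω) + |𝒞| = |Δ₁|`. Since `p + 2 ≠ 0`, the equation `f = [p + 2, p]` says that `𝒞 = ∅` and that
`𝒩` is a single `Φ`-orbit with `|𝒩| = p + 2` and `∑ ℓ(ω) = p`; the two counts then give
`|Δ₀| = |Δ₁| + 1`.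

Conversely, alternately following a maximal path forwards and a maximal antipath backwards is a
permutation of the sides, each taken in two phases: the boundary walk. Attaching an arrow multiplies
the walk by a transposition, which for a new leaf merges the cycle of the leaf with the cycle of
the tree. Hence the walk of a tree is a single cycle. Its successive antipath phases run through a
`Φ`-orbit, so there is only one; and an arrow of `𝒞` would give a cycle of the walk lying entirely
in the antipath phase, so `𝒞 = ∅`.
-/

namespace GentleQuiv

section Chain

variable {α : Type*} {r : α → α → Prop} {a b : α} {l l' : List α}

/-- A nonempty `r`-chain that cannot be extended at either end. -/
structure IsMaximalChain (r : α → α → Prop) (l : List α) : Prop where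
  ne_nil : l ≠ []
  isChain : l.IsChain r
  head_initial : ∀ a ∈ l.head?, ∀ c, ¬ r c a
  last_terminal : ∀ a ∈ l.getLast?, ∀ b, ¬ r a b

theorem isChain_eq_of_last_terminal (hr : Relator.RightUnique r)
    (h : (a :: l).IsChain r) (h' : (a :: l').IsChain r)
    (ht : ∀ x ∈ (a :: l).getLast?, ∀ b, ¬ r x b)
    (ht' : ∀ x ∈ (a :: l').getLast?, ∀ b, ¬ r x b) : l = l' := by
  induction l generalizing a l' with
  | nil =>
    cases l' with
    | nil => rfl
    | cons c m => exact absurd (List.isChain_cons_cons.1 h').1 (ht a (by simp) c)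
  | cons b l ih =>
    cases l' with
    | nil => exact absurd (List.isChain_cons_cons.1 h).1 (ht' a (by simp) b)
    | cons c m =>
      rw [List.isChain_cons_cons] at h h'
      obtain rfl := hr h.1 h'.1
      rw [List.getLast?_cons_cons] at ht ht'
      rw [ih h.2 h'.2 ht ht']

theorem isChain_eq_of_head_initial (hr : Relator.LeftUnique r)
    (h : (l ++ [a]).IsChain r) (h' : (l' ++ [a]).IsChain r)
    (hi : ∀ x ∈ (l ++ [a]).head?, ∀ c, ¬ r c x)
    (hi' : ∀ x ∈ (l' ++ [a]).head?, ∀ c, ¬ r c x) : l = l' := by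
  have reverse_cons (m : List α) : a :: m.reverse = (m ++ [a]).reverse := by simp
  refine List.reverse_injective (isChain_eq_of_last_terminal (r := fun x y ↦ r y x) (a := a)
    (fun _ _ _ hb hc ↦ hr hb hc) ?_ ?_ ?_ ?_)
  · rwa [reverse_cons, List.isChain_reverse]
  · rwa [reverse_cons, List.isChain_reverse]
  · rwa [reverse_cons, List.getLast?_reverse]
  · rwa [reverse_cons, List.getLast?_reverse]

theorem nodup_of_last_terminal (hr : Relator.RightUnique r) (h : l.IsChain r)
    (ht : ∀ x ∈ l.getLast?, ∀ b, ¬ r x b) : l.Nodup := by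
  induction l with
  | nil => exact List.nodup_nil
  | cons a l ih =>
    refine List.nodup_cons.2 ⟨fun ha ↦ ?_, ih h.tail fun x hx ↦ ht x ?_⟩
    · obtain ⟨s, t, rfl⟩ := List.append_of_mem ha
      have ht' : ∀ x ∈ (a :: t).getLast?, ∀ b, ¬ r x b := by
        simpa [List.getLast?_cons, List.getLast?_append] using ht
      have := congrArg List.length
        (isChain_eq_of_last_terminal hr h (h.suffix ⟨a :: s, rfl⟩) ht ht')
      simp only [List.length_append, List.length_cons] at this
      omega
    · cases l with
      | nil => simp at hx
      | cons => simpa using hx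

namespace IsMaximalChain

theorem nodup (hr : Relator.RightUnique r) (h : IsMaximalChain r l) : l.Nodup :=
  nodup_of_last_terminal hr h.isChain h.last_terminal

theorem eq_of_mem (hr : Relator.BiUnique r) (h : IsMaximalChain r l) (h' : IsMaximalChain r l')
    (ha : a ∈ l) (ha' : a ∈ l') : l = l' := by
  obtain ⟨s, t, rfl⟩ := List.append_of_mem ha
  obtain ⟨s', t', rfl⟩ := List.append_of_mem ha'
  obtain ⟨hs, ht⟩ := List.isChain_split.1 h.isChain
  obtain ⟨hs', ht'⟩ := List.isChain_split.1 h'.isChain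
  have after_eq : t = t' := isChain_eq_of_last_terminal hr.2 ht ht'
    (by simpa using h.last_terminal) (by simpa using h'.last_terminal)
  have before_eq : s = s' := isChain_eq_of_head_initial hr.1 hs hs'
    (by simpa using h.head_initial) (by simpa using h'.head_initial)
  rw [after_eq, before_eq]

theorem mem_of_rel (hr : Relator.LeftUnique r) (h : IsMaximalChain r l) (hab : r a b)
    (hb : b ∈ l) : a ∈ l := by
  obtain ⟨s, t, rfl⟩ := List.append_of_mem hb
  obtain rfl | ⟨s, c, rfl⟩ := List.eq_nil_or_concat' s
  · exact absurd hab (h.head_initial b (by simp) a)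
  · have hcb : r c b := by
      have := h.isChain
      simp only [List.append_assoc, List.cons_append, List.nil_append] at this
      exact (List.isChain_append_cons_cons.1 this).2.1
    simp [hr hab hcb]

end IsMaximalChain

theorem exists_isMaximalChain (hr : Relator.RightUnique r) (s : Finset α)
    (hs : ∀ x y, r x y → x ∈ s) (ha : a ∈ s) (ht : ∀ b, ¬ r a b) :
    ∃ l, IsMaximalChain r l ∧ a ∈ l.getLast? ∧ ∀ x ∈ l, x ∈ s := by
  by_contra! hmax
  have long : ∀ n : ℕ, ∃ l : List α, l.length = n + 1 ∧ l.IsChain r ∧ a ∈ l.getLast? ∧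
      ∀ x ∈ l, x ∈ s := by
    intro n
    induction n with
    | zero => exact ⟨[a], by simpa using ha⟩
    | succ n ih =>
      obtain ⟨l, hlen, hl, hla, hls⟩ := ih
      obtain ⟨b, l, rfl⟩ := List.exists_cons_of_length_eq_add_one hlen
      have hb : ∃ c, r c b := by
        by_contra! hb
        obtain ⟨x, hx, hxs⟩ := hmax (b :: l)
          ⟨by simp, hl, by simpa using hb, fun x hx ↦ Option.mem_unique hla hx ▸ ht⟩ hla
        exact hxs (hls x hx)
      obtain ⟨c, hc⟩ := hb
      exact ⟨c :: b :: l, by simpa using hlen, hl.cons_cons hc, by simpa using hla,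
        List.forall_mem_cons.2 ⟨hs c b hc, hls⟩⟩
  obtain ⟨l, hlen, hl, hla, hls⟩ := long s.card
  have hnodup := nodup_of_last_terminal hr hl fun x hx ↦ Option.mem_unique hla hx ▸ ht
  classical
  have := Finset.card_le_card (fun x hx ↦ hls x (List.mem_toFinset.1 hx) : l.toFinset ⊆ s)
  rw [List.toFinset_card_of_nodup hnodup] at this
  omega

end Chain

section Perm

open Equiv

variable {α : Type*} {f : Perm α} {s t : Finset α} {a b : α}

theorem coe_subset_of_isCycleOn (hf : f.IsCycleOn s) {X : Set α} (hX : Set.MapsTo f X X)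
    (ha : a ∈ s) (haX : a ∈ X) : ↑s ⊆ X := by
  intro x hx
  obtain ⟨n, _, rfl⟩ := hf.exists_pow_eq ha hx
  exact hX.perm_pow n haX

variable [DecidableEq α]

theorem sameCycle_mul_swap (hf : f.IsCycleOn s) (ha : a ∈ s) (hb : b ∉ s) {x : α}
    (hx : x ∈ s) : (f * swap a b).SameCycle x a := by
  obtain ⟨n, -, hn⟩ := hf.exists_pow_eq hx ha
  induction n generalizing x with
  | zero => exact hn ▸ .refl _ _
  | succ n ih =>
    obtain rfl | hxa := eq_or_ne x a
    · exact .refl _ _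
    have hfx : (f * swap a b) x = f x := by
      rw [Perm.mul_apply, swap_apply_of_ne_of_ne hxa (ne_of_mem_of_not_mem hx hb)]
    rw [← Perm.sameCycle_apply_left, hfx]
    exact ih (hf.1.mapsTo hx) (by rwa [pow_succ, Perm.mul_apply] at hn)

theorem isCycleOn_mul_swap (hf : f.IsCycleOn s) (hf' : f.IsCycleOn t) (hst : Disjoint s t)
    (ha : a ∈ s) (hb : b ∈ t) : (f * swap a b).IsCycleOn (s ∪ t : Finset α) := by
  have to_a {x : α} (hx : x ∈ s) : (f * swap a b).SameCycle x a :=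
    sameCycle_mul_swap hf ha (Finset.disjoint_right.1 hst hb) hx
  have to_b {x : α} (hx : x ∈ t) : (f * swap a b).SameCycle x b :=
    swap_comm a b ▸ sameCycle_mul_swap hf' hb (Finset.disjoint_left.1 hst ha) hx
  have a_to_b : (f * swap a b).SameCycle a b := by
    rw [← Perm.sameCycle_apply_left, Perm.mul_apply, swap_apply_left]
    exact to_b (hf'.1.mapsTo hb)
  have union_to_b {x : α} (hx : x ∈ s ∪ t) : (f * swap a b).SameCycle x b :=
    (Finset.mem_union.1 hx).elim (fun hxs ↦ (to_a hxs).trans a_to_b) to_b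
  refine ⟨?_, fun x hx y hy ↦ (union_to_b hx).trans (union_to_b hy).symm⟩
  rw [Finset.coe_union]
  exact (hf.1.union hf'.1 f.injective.injOn).comp (bijOn_swap (.inl ha) (.inr hb))

end Perm

section Fiber

theorem forall_ncard_fiber_eq_ite_iff {α β : Type*} [DecidableEq β] {S : Set α} (hS : S.Finite)
    (f : α → β) (b : β) :
    (∀ y, {s ∈ S | f s = y}.ncard = if y = b then 1 else 0) ↔ ∃ s, S = {s} ∧ f s = b := by
  constructor
  · intro h
    obtain ⟨s, hs⟩ := Set.ncard_eq_one.1 ((h b).trans (if_pos rfl))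
    obtain ⟨hsS, hsb⟩ : s ∈ {s ∈ S | f s = b} := hs ▸ Set.mem_singleton s
    refine ⟨s, Set.eq_singleton_iff_unique_mem.2 ⟨hsS, fun t ht ↦ ?_⟩, hsb⟩
    have htb : f t = b := by
      by_contra htb
      have hempty : {s ∈ S | f s = f t} = ∅ :=
        (Set.ncard_eq_zero (hS.sep _)).1 ((h (f t)).trans (if_neg htb))
      exact Set.notMem_empty t (hempty ▸ ⟨ht, rfl⟩)
    exact Set.mem_singleton_iff.1 (hs ▸ ⟨ht, htb⟩)
  · rintro ⟨s, rfl, rfl⟩ y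
    by_cases hy : y = f s
    · subst hy
      rw [if_pos rfl, Set.ncard_eq_one]
      exact ⟨s, Set.sep_eq_self_iff_mem_true.2 (by simp)⟩
    · have hempty : {t ∈ ({s} : Set α) | f t = y} = ∅ :=
        Set.eq_empty_of_forall_notMem fun t ⟨ht, hty⟩ ↦ hy (hty ▸ ht ▸ rfl)
      rw [if_neg hy, hempty, Set.ncard_empty]

theorem iff_of_eqvGen {α : Type*} {r : α → α → Prop} {P : α → Prop}
    (hr : ∀ x y, r x y → P x ∧ P y) {x y : α} (h : Relation.EqvGen r x y) : P x ↔ P y := by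
  induction h with
  | rel x y hxy => exact iff_of_true (hr x y hxy).1 (hr x y hxy).2
  | refl => rfl
  | symm _ _ _ ih => exact ih.symm
  | trans _ _ _ _ _ ih ih' => exact ih.trans ih'

end Fiber

/-- A quiver with zero relations of length two: arrows join vertices and relations are composable
pairs of arrows. -/
structure IsWellFormed (Q : QuivRel) : Prop where
  src_mem : ∀ a ∈ Q.A, Q.src a ∈ Q.V
  tgt_mem : ∀ a ∈ Q.A, Q.tgt a ∈ Q.V
  composable : ∀ ρ ∈ Q.rel, ρ.1 ∈ Q.A ∧ ρ.2 ∈ Q.A ∧ Q.src ρ.1 = Q.tgt ρ.2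

theorem IsGentle.isWellFormed {Q : QuivRel} (hQ : IsGentle Q) : IsWellFormed Q :=
  ⟨fun a ha ↦ (hQ.2.1 a ha).1, fun a ha ↦ (hQ.2.1 a ha).2, hQ.2.2.2.1⟩

/-- `αβ ∈ R`, as a binary relation on arrows; its chains are the antipaths. -/
abbrev ZeroRel (Q : QuivRel) (a b : ℕ) : Prop := (a, b) ∈ Q.rel

/-- A side of a vertex: the vertex together with a sign `±1`. The functions `σ` and `τ` attach
the two ends of every arrow to sides. -/
abbrev Side := ℕ × ℤ

/-- The other side of the same vertex. -/
def Side.opp (u : Side) : Side := (u.1, -u.2)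

@[simp] theorem Side.opp_opp (u : Side) : u.opp.opp = u := Prod.ext rfl (neg_neg _)

theorem Side.opp_injective : Function.Injective Side.opp :=
  Function.LeftInverse.injective Side.opp_opp

/-- The two sides of each vertex in `S`. -/
def sides (S : Finset ℕ) : Finset Side := S ×ˢ {1, -1}

theorem mem_sides {S : Finset ℕ} {u : Side} :
    u ∈ sides S ↔ u.1 ∈ S ∧ (u.2 = 1 ∨ u.2 = -1) := by
  simp [sides]

theorem opp_mem_sides {S : Finset ℕ} {u : Side} : u.opp ∈ sides S ↔ u ∈ sides S := by
  simp only [mem_sides, Side.opp, neg_eq_iff_eq_neg, neg_neg, or_comm]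

theorem card_sides (S : Finset ℕ) : (sides S).card = 2 * S.card := by
  rw [sides, Finset.card_product, mul_comm]
  rfl

section Sides

variable {Q : QuivRel} (st : SigmaTau Q)

/-- The side `(sα, σα)` to which the start of `α` is attached. -/
def SigmaTau.tail (a : ℕ) : Side := (Q.src a, st.σ a)

/-- The side `(tα, τα)` to which the terminus of `α` is attached. -/
def SigmaTau.head (a : ℕ) : Side := (Q.tgt a, st.τ a)

/-- The side `(sω, σω)`, for paths and antipaths alike. -/
def Thread.start (w : Thread) : Side := (w.source Q, w.sigma st)

/-- The side `(tω, τω)` of a path `ω`. -/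
def Thread.endPath (w : Thread) : Side := (w.target Q, w.tauPath st)

/-- The side `(tω, τω)` of an antipath `ω`. -/
def Thread.endAnti (w : Thread) : Side := (w.target Q, w.tauAnti st)

theorem tail_injOn : Set.InjOn st.tail Q.A := by
  intro a ha b hb hab
  by_contra hne
  simp only [SigmaTau.tail, Prod.mk.injEq] at hab
  have := st.σ_src a ha b hb hne hab.1
  have := st.σ_pm a ha
  omega

theorem head_injOn : Set.InjOn st.head Q.A := by
  intro a ha b hb hab
  by_contra hne
  simp only [SigmaTau.head, Prod.mk.injEq] at hab
  have := st.τ_tgt a ha b hb hne hab.1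
  have := st.τ_pm a ha
  omega

theorem tail_mem_sides {a : ℕ} {S : Finset ℕ} (ha : a ∈ Q.A) :
    st.tail a ∈ sides S ↔ Q.src a ∈ S := by
  simp [mem_sides, SigmaTau.tail, st.σ_pm a ha]

theorem head_mem_sides {a : ℕ} {S : Finset ℕ} (ha : a ∈ Q.A) :
    st.head a ∈ sides S ↔ Q.tgt a ∈ S := by
  simp [mem_sides, SigmaTau.head, st.τ_pm a ha]

theorem zeroRel_iff (hQ : IsWellFormed Q) {a b : ℕ} :
    ZeroRel Q a b ↔ a ∈ Q.A ∧ b ∈ Q.A ∧ st.tail a = st.head b := by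
  constructor
  · intro h
    obtain ⟨ha, hb, hab⟩ := hQ.composable _ h
    exact ⟨ha, hb, Prod.ext hab ((st.rel_iff a ha b hb hab).1 h)⟩
  · rintro ⟨ha, hb, hab⟩
    obtain ⟨hv, hε⟩ := Prod.ext_iff.1 hab
    exact (st.rel_iff a ha b hb hv).2 hε

theorem biUnique_zeroRel {Q : QuivRel} (st : SigmaTau Q) (hQ : IsWellFormed Q) :
    Relator.BiUnique (ZeroRel Q) := by
  simp only [Relator.BiUnique, Relator.LeftUnique, Relator.RightUnique, zeroRel_iff st hQ]
  exact ⟨fun a c b ⟨ha, _, hab⟩ ⟨hc, _, hcb⟩ ↦ tail_injOn st ha hc (hab.trans hcb.symm),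
    fun a b c ⟨_, hb, hab⟩ ⟨_, hc, hac⟩ ↦ head_injOn st hb hc (hab.symm.trans hac)⟩

theorem inM_iff {w : Thread} :
    InM Q st w ↔ IsPathThread Q w ∧ (w.endPath st).opp ∉ Q.A.image st.tail ∧
      (w.start st).opp ∉ Q.A.image st.head := by
  simp [InM, Thread.endPath, Thread.start, Side.opp, SigmaTau.tail, SigmaTau.head]

theorem inN_iff {w : Thread} :
    InN Q st w ↔ IsAntiThread Q w ∧ w.endAnti st ∉ Q.A.image st.tail ∧
      w.start st ∉ Q.A.image st.head := by
  simp [InN, Thread.endAnti, Thread.start, SigmaTau.tail, SigmaTau.head]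

theorem phiRel_iff {w w' : Thread} :
    PhiRel Q st w w' ↔ InN Q st w ∧ InN Q st w' ∧ ∃ m, InM Q st m ∧
      m.start st = (w.start st).opp ∧ w'.endAnti st = (m.endPath st).opp := by
  simp only [PhiRel, Thread.start, Thread.endAnti, Thread.endPath, Side.opp, Prod.mk.injEq,
    and_assoc]

theorem start_arrows_concat (l : List ℕ) (a : ℕ) :
    (Thread.arrows (l ++ [a])).start st = st.tail a := by
  simp [Thread.start, Thread.source, Thread.sigma, SigmaTau.tail]

theorem inN_arrows_iff (hQ : IsWellFormed Q) {l : List ℕ} :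
    InN Q st (.arrows l) ↔ (∀ a ∈ l, a ∈ Q.A) ∧ IsMaximalChain (ZeroRel Q) l := by
  rw [inN_iff]
  obtain rfl | ⟨s, b, rfl⟩ := List.eq_nil_or_concat' l
  · exact ⟨fun h ↦ absurd rfl h.1.1, fun h ↦ absurd rfl h.2.ne_nil⟩
  obtain ⟨a, t, hat⟩ := List.exists_cons_of_ne_nil (List.concat_ne_nil b s)
  have hend : (Thread.arrows (s ++ [b])).endAnti st = st.head a := by rw [hat]; rfl
  have hhead : (s ++ [b]).head? = some a := by rw [hat]; rfl
  have hlast : (s ++ [b]).getLast? = some b := by simp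
  rw [hend, start_arrows_concat]
  constructor
  · rintro ⟨⟨hne, hmem, hchain⟩, hfst, hlst⟩
    refine ⟨hmem, hne, hchain, ?_, ?_⟩
    · simp only [hhead, Option.mem_some_iff, forall_eq', zeroRel_iff st hQ]
      exact fun c ⟨hc, _, hca⟩ ↦ hfst (Finset.mem_image.2 ⟨c, hc, hca⟩)
    · simp only [hlast, Option.mem_some_iff, forall_eq', zeroRel_iff st hQ]
      exact fun c ⟨_, hc, hbc⟩ ↦ hlst (Finset.mem_image.2 ⟨c, hc, hbc.symm⟩)
  · rintro ⟨hmem, hmax⟩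
    have ha : a ∈ Q.A := hmem a (List.mem_of_mem_head? hhead)
    have hb : b ∈ Q.A := hmem b (by simp)
    refine ⟨⟨hmax.ne_nil, hmem, hmax.isChain⟩, ?_, ?_⟩ <;> rw [Finset.mem_image]
    · rintro ⟨c, hc, hca⟩
      exact hmax.head_initial a hhead c ((zeroRel_iff st hQ).2 ⟨hc, ha, hca⟩)
    · rintro ⟨c, hc, hcb⟩
      exact hmax.last_terminal b hlast c ((zeroRel_iff st hQ).2 ⟨hb, hc, hcb.symm⟩)

end Sides

section Counting

variable {Q : QuivRel} {st : SigmaTau Q}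

theorem start_injOn (hQ : IsWellFormed Q) : Set.InjOn (Thread.start st) {w | InN Q st w} := by
  have triv_ne_arrows {x : ℕ} {ε : ℤ} {l : List ℕ} (h : InN Q st (.triv x ε))
      (hl : InN Q st (.arrows l)) :
      (Thread.triv x ε).start st ≠ (Thread.arrows l).start st := by
    obtain rfl | ⟨l, a, rfl⟩ := List.eq_nil_or_concat' l
    · exact absurd rfl hl.1.1
    · rw [start_arrows_concat]
      intro hx
      exact ((inN_iff st).1 h).2.1
        (Finset.mem_image.2 ⟨a, ((inN_arrows_iff st hQ).1 hl).1 a (by simp), hx.symm⟩)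
  rintro (⟨x, ε⟩ | l) h (⟨x', ε'⟩ | l') h' heq
  · obtain ⟨rfl, rfl⟩ := Prod.ext_iff.1 heq
    rfl
  · exact absurd heq (triv_ne_arrows h h')
  · exact absurd heq.symm (triv_ne_arrows h' h)
  · obtain rfl | ⟨l, a, rfl⟩ := List.eq_nil_or_concat' l
    · exact absurd rfl h.1.1
    obtain rfl | ⟨l', a', rfl⟩ := List.eq_nil_or_concat' l'
    · exact absurd rfl h'.1.1
    rw [Set.mem_ofPred_eq, inN_arrows_iff st hQ] at h h'
    rw [start_arrows_concat, start_arrows_concat] at heq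
    obtain rfl : a = a' := tail_injOn st (h.1 a (by simp)) (h'.1 a' (by simp)) heq
    rw [h.2.eq_of_mem (biUnique_zeroRel st hQ) h'.2 (a := a) (by simp) (by simp)]

theorem start_mem_sides (hQ : IsWellFormed Q) {w : Thread} (hw : IsAntiThread Q w) :
    w.start st ∈ sides Q.V := by
  obtain ⟨x, ε⟩ | l := w
  · exact mem_sides.2 hw
  · obtain rfl | ⟨l, a, rfl⟩ := List.eq_nil_or_concat' l
    · exact absurd rfl hw.1
    have ha : a ∈ Q.A := hw.2.1 a (by simp)
    rw [start_arrows_concat, tail_mem_sides st ha]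
    exact hQ.src_mem a ha

theorem exists_inN_arrows_of_terminal (hQ : IsWellFormed Q) (st : SigmaTau Q) {a : ℕ}
    (ha : a ∈ Q.A) (hterm : ∀ b, ¬ ZeroRel Q a b) :
    ∃ l, InN Q st (.arrows l) ∧ a ∈ l.getLast? := by
  obtain ⟨l, hl, hal, hlA⟩ := exists_isMaximalChain (biUnique_zeroRel st hQ).2 Q.A
    (fun x y hxy ↦ ((zeroRel_iff st hQ).1 hxy).1) ha hterm
  exact ⟨l, (inN_arrows_iff st hQ).2 ⟨hlA, hl⟩, hal⟩

theorem start_surjOn (hQ : IsWellFormed Q) :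
    Set.SurjOn (Thread.start st) {w | InN Q st w} ↑(sides Q.V \ Q.A.image st.head) := by
  intro u hu
  obtain ⟨huV, huA⟩ := Finset.mem_sdiff.1 hu
  by_cases htail : u ∈ Q.A.image st.tail
  · obtain ⟨a, ha, rfl⟩ := Finset.mem_image.1 htail
    obtain ⟨l, hl, hal⟩ := exists_inN_arrows_of_terminal hQ st ha fun b hab ↦ by
      obtain ⟨_, hb, heq⟩ := (zeroRel_iff st hQ).1 hab
      exact huA (Finset.mem_image.2 ⟨b, hb, heq.symm⟩)
    refine ⟨_, hl, ?_⟩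
    obtain ⟨l, rfl⟩ := List.getLast?_eq_some_iff.1 hal
    exact start_arrows_concat st l a
  · exact ⟨.triv u.1 u.2, (inN_iff st).2 ⟨mem_sides.1 huV, htail, huA⟩, rfl⟩

theorem start_bijOn (hQ : IsWellFormed Q) :
    Set.BijOn (Thread.start st) {w | InN Q st w} ↑(sides Q.V \ Q.A.image st.head) :=
  ⟨fun _ hw ↦ Finset.mem_coe.2 <| Finset.mem_sdiff.2
      ⟨start_mem_sides hQ hw.1, ((inN_iff st).1 hw).2.2⟩,
    start_injOn hQ, start_surjOn hQ⟩

theorem finite_setOf_inN (hQ : IsWellFormed Q) : {w | InN Q st w}.Finite :=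
  (start_bijOn hQ).finite_iff_finite.2 (Finset.finite_toSet _)

theorem pN_setOf_inN_add_card (hQ : IsWellFormed Q) :
    pN {w | InN Q st w} + Q.A.card = 2 * Q.V.card := by
  have hsub : Q.A.image st.head ⊆ sides Q.V :=
    Finset.image_subset_iff.2 fun a ha ↦ (head_mem_sides st ha).2 (hQ.tgt_mem a ha)
  have hN : pN {w | InN Q st w} = (sides Q.V \ Q.A.image st.head).card := by
    rw [pN, ← (start_injOn hQ).ncard_image, (start_bijOn hQ).image_eq, Set.ncard_coe_finset]
  rw [hN, ← Finset.card_image_of_injOn (head_injOn st), Finset.card_sdiff_add_card_eq_card hsub,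
    card_sides]

/-- The set of arrows occurring in a thread. -/
def Thread.support : Thread → Finset ℕ
  | .triv _ _ => ∅
  | .arrows l => l.toFinset

theorem mem_support {w : Thread} {a : ℕ} : a ∈ w.support ↔ ∃ l, w = .arrows l ∧ a ∈ l := by
  cases w <;> simp [Thread.support]

theorem card_support (hQ : IsWellFormed Q) {w : Thread} (hw : InN Q st w) :
    w.support.card = w.len := by
  cases w with
  | triv => rfl
  | arrows l =>
    exact List.toFinset_card_of_nodup
      (((inN_arrows_iff st hQ).1 hw).2.nodup (biUnique_zeroRel st hQ).2)

theorem pairwiseDisjoint_support (hQ : IsWellFormed Q) :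
    {w | InN Q st w}.PairwiseDisjoint fun w ↦ (w.support : Set ℕ) := by
  intro w hw w' hw' hne
  refine Set.disjoint_left.2 fun a ha ha' ↦ hne ?_
  obtain ⟨l, rfl, hal⟩ := mem_support.1 ha
  obtain ⟨l', rfl, hal'⟩ := mem_support.1 ha'
  rw [((inN_arrows_iff st hQ).1 hw).2.eq_of_mem (biUnique_zeroRel st hQ)
    ((inN_arrows_iff st hQ).1 hw').2 hal hal']

theorem qN_setOf_inN_add_ncard (hQ : IsWellFormed Q) :
    qN {w | InN Q st w} + {a | InC Q st a}.ncard = Q.A.card := by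
  have hunion : (⋃ w ∈ {w | InN Q st w}, (w.support : Set ℕ)) ∪ {a | InC Q st a} = Q.A := by
    ext a
    simp only [Set.mem_union, Set.mem_iUnion, Finset.mem_coe, mem_support, InC]
    constructor
    · rintro (⟨w, hw, l, rfl, hal⟩ | ha)
      · exact ((inN_arrows_iff st hQ).1 hw).1 a hal
      · exact ha.1
    · intro ha
      by_cases hN : ∃ l, InN Q st (.arrows l) ∧ a ∈ l
      · obtain ⟨l, hl, hal⟩ := hN
        exact .inl ⟨_, hl, l, rfl, hal⟩
      · exact .inr ⟨ha, hN⟩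
  have hdisj : Disjoint (⋃ w ∈ {w | InN Q st w}, (w.support : Set ℕ)) {a | InC Q st a} := by
    simp only [Set.disjoint_iUnion_left]
    refine fun w hw ↦ Set.disjoint_left.2 fun a ha hC ↦ ?_
    obtain ⟨l, rfl, hal⟩ := mem_support.1 ha
    exact hC.2 ⟨l, hw, hal⟩
  have hcard : (⋃ w ∈ {w | InN Q st w}, (w.support : Set ℕ)).ncard = qN {w | InN Q st w} := by
    rw [(finite_setOf_inN hQ).ncard_biUnion (fun w _ ↦ w.support.finite_toSet)
      (pairwiseDisjoint_support hQ), qN]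
    refine finsum_mem_congr rfl fun w hw ↦ ?_
    rw [Set.ncard_coe_finset, card_support hQ hw]
  rw [← hcard, ← Set.ncard_coe_finset, ← hunion]
  have hfin := hunion ▸ Q.A.finite_toSet
  exact (Set.ncard_union_eq hdisj (hfin.subset Set.subset_union_left)
    (hfin.subset Set.subset_union_right)).symm

theorem exists_inC_zeroRel (hQ : IsWellFormed Q) {a : ℕ} (ha : InC Q st a) :
    ∃ b, InC Q st b ∧ ZeroRel Q a b := by
  obtain ⟨b, hab⟩ : ∃ b, ZeroRel Q a b := by
    by_contra! hterm
    obtain ⟨l, hl, hal⟩ := exists_inN_arrows_of_terminal hQ st ha.1 hterm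
    exact ha.2 ⟨l, hl, List.mem_of_mem_getLast? hal⟩
  refine ⟨b, ⟨((zeroRel_iff st hQ).1 hab).2.1, fun ⟨l, hl, hbl⟩ ↦ ha.2 ⟨l, hl, ?_⟩⟩, hab⟩
  exact ((inN_arrows_iff st hQ).1 hl).2.mem_of_rel (biUnique_zeroRel st hQ).1 hab hbl

end Counting

section Walk

open Equiv

/-- A state of the boundary walk: a side together with a phase, `true` while the walk follows
paths of the quiver and `false` while it follows antipaths backwards. -/
abbrev State := Side × Bool

/-- The two states at each side of each vertex in `S`. -/
def states (S : Finset ℕ) : Finset State := sides S ×ˢ Finset.univ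

theorem mem_states {S : Finset ℕ} {v : State} : v ∈ states S ↔ v.1 ∈ sides S := by
  simp [states]

/-- The boundary walk of the quiver without arrows: the phase alternates, and the side changes
after each antipath phase. -/
def turn : Perm State where
  toFun v := if v.2 then (v.1, false) else (v.1.opp, true)
  invFun v := if v.2 then (v.1.opp, false) else (v.1, true)
  left_inv := by rintro ⟨u, _ | _⟩ <;> simp
  right_inv := by rintro ⟨u, _ | _⟩ <;> simp

variable {Q : QuivRel} {st : SigmaTau Q} {π : Perm State} {T : Finset ℕ}

/-- `π` is the boundary walk of the subquiver with arrows `T`. In the path phase it follows an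
arrow of `T` to the opposite of its head side, in the antipath phase it follows an arrow of `T`
backwards; where there is no arrow to follow it changes the phase as `turn` does. -/
structure IsWalk (st : SigmaTau Q) (T : Finset ℕ) (π : Perm State) : Prop where
  apply_tail : ∀ a ∈ T, π (st.tail a, true) = ((st.head a).opp, true)
  apply_head : ∀ a ∈ T, π (st.head a, false) = (st.tail a, false)
  apply_true : ∀ u, u ∉ T.image st.tail → π (u, true) = (u, false)
  apply_false : ∀ u, u ∉ T.image st.head → π (u, false) = (u.opp, true)

theorem isWalk_turn : IsWalk st ∅ turn := by
  constructor <;> simp [turn]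

theorem IsWalk.insert (hπ : IsWalk st T π) {a : ℕ} (ha : a ∉ T) (hT : insert a T ⊆ Q.A) :
    IsWalk st (insert a T) (π * swap (st.tail a, true) (st.head a, false)) := by
  obtain ⟨haA, hTA⟩ := Finset.insert_subset_iff.1 hT
  have htail {b : ℕ} (hb : b ∈ T) : st.tail b ≠ st.tail a := fun h ↦
    ha (tail_injOn st (hTA hb) haA h ▸ hb)
  have hhead {b : ℕ} (hb : b ∈ T) : st.head b ≠ st.head a := fun h ↦
    ha (head_injOn st (hTA hb) haA h ▸ hb)
  have htail_a : st.tail a ∉ T.image st.tail := fun h ↦ by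
    obtain ⟨b, hb, hba⟩ := Finset.mem_image.1 h
    exact htail hb hba
  have hhead_a : st.head a ∉ T.image st.head := fun h ↦ by
    obtain ⟨b, hb, hba⟩ := Finset.mem_image.1 h
    exact hhead hb hba
  have apply_of_ne_tail {u : Side} (hu : u ≠ st.tail a) :
      (π * swap (st.tail a, true) (st.head a, false)) (u, true) = π (u, true) := by
    rw [Perm.mul_apply, swap_apply_of_ne_of_ne] <;> simp [hu]
  have apply_of_ne_head {u : Side} (hu : u ≠ st.head a) :
      (π * swap (st.tail a, true) (st.head a, false)) (u, false) = π (u, false) := by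
    rw [Perm.mul_apply, swap_apply_of_ne_of_ne] <;> simp [hu]
  constructor
  · simp only [Finset.forall_mem_insert, Perm.mul_apply, swap_apply_left]
    exact ⟨hπ.apply_false _ hhead_a, fun b hb ↦
      (apply_of_ne_tail (htail hb)).trans (hπ.apply_tail b hb)⟩
  · simp only [Finset.forall_mem_insert, Perm.mul_apply, swap_apply_right]
    exact ⟨hπ.apply_true _ htail_a, fun b hb ↦
      (apply_of_ne_head (hhead hb)).trans (hπ.apply_head b hb)⟩
  · intro u hu
    rw [Finset.image_insert, Finset.mem_insert, not_or] at hu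
    exact (apply_of_ne_tail hu.1).trans (hπ.apply_true u hu.2)
  · intro u hu
    rw [Finset.image_insert, Finset.mem_insert, not_or] at hu
    exact (apply_of_ne_head hu.1).trans (hπ.apply_false u hu.2)

theorem isCycleOn_states_singleton {y : ℕ} (htrue : ∀ u ∈ sides {y}, π (u, true) = (u, false))
    (hfalse : ∀ u ∈ sides {y}, π (u, false) = (u.opp, true)) : π.IsCycleOn (states {y}) := by
  have to_path {v : State} (hv : v ∈ states {y}) : π.SameCycle v (v.1, true) := by
    obtain ⟨u, _ | _⟩ := v
    · simpa only [htrue u (mem_states.1 hv)] using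
        Perm.sameCycle_apply_left.2 (Perm.SameCycle.refl π (u, true))
    · exact .refl _ _
  have to_opp {u : Side} (hu : u ∈ sides {y}) : π.SameCycle (u, true) (u.opp, true) := by
    rw [← hfalse u hu, ← htrue u hu, Perm.sameCycle_apply_right, Perm.sameCycle_apply_right]
  have hmaps : Set.MapsTo π (states {y}) (states {y}) := by
    rintro ⟨u, _ | _⟩ hv <;> rw [Finset.mem_coe, mem_states] at hv ⊢
    · rwa [hfalse u hv, opp_mem_sides]
    · rwa [htrue u hv]
  refine ⟨⟨hmaps, π.injective.injOn, Finset.surjOn_of_injOn_of_card_le _ hmaps π.injective.injOn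
    le_rfl⟩, fun v hv v' hv' ↦ (to_path hv).trans (.trans ?_ (to_path hv').symm)⟩
  rw [Finset.mem_coe, mem_states] at hv hv'
  have hside : v'.1 = v.1 ∨ v'.1 = v.1.opp := by
    simp only [mem_sides, Finset.mem_singleton] at hv hv'
    simp only [Side.opp, Prod.ext_iff]
    omega
  obtain h | h := hside
  · exact h ▸ .refl _ _
  · exact h ▸ to_opp hv

protected theorem IsWalk.isCycleOn_states_singleton (hπ : IsWalk st T π) {y : ℕ}
    (hy : ∀ a ∈ T, Q.src a ≠ y ∧ Q.tgt a ≠ y) : π.IsCycleOn (states {y}) := by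
  refine isCycleOn_states_singleton (fun u hu ↦ hπ.apply_true u fun h ↦ ?_)
    fun u hu ↦ hπ.apply_false u fun h ↦ ?_
  · obtain ⟨a, ha, rfl⟩ := Finset.mem_image.1 h
    exact (hy a ha).1 (Finset.mem_singleton.1 (mem_sides.1 hu).1)
  · obtain ⟨a, ha, rfl⟩ := Finset.mem_image.1 h
    exact (hy a ha).2 (Finset.mem_singleton.1 (mem_sides.1 hu).1)

end Walk

section Tree

open Equiv

variable {Q : QuivRel} {S T : Finset ℕ}

/-- The arrow `a` joins the vertices `x` and `y`, in either direction. -/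
def Joins (Q : QuivRel) (a x y : ℕ) : Prop :=
  (Q.src a = x ∧ Q.tgt a = y) ∨ (Q.src a = y ∧ Q.tgt a = x)

/-- `(S, T)` are the vertices and arrows of a subtree of `Q`, built from a single vertex by
attaching one leaf at a time. -/
inductive Subtree (Q : QuivRel) : Finset ℕ → Finset ℕ → Prop
  | single {x : ℕ} : x ∈ Q.V → Subtree Q {x} ∅
  | graft {S T : Finset ℕ} {a x y : ℕ} : Subtree Q S T → a ∈ Q.A → x ∈ S → y ∈ Q.V → y ∉ S →
      Joins Q a x y → Subtree Q (insert y S) (insert a T)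

namespace Subtree

theorem subset_vertices (h : Subtree Q S T) : S ⊆ Q.V := by
  induction h with
  | single hx => simpa using hx
  | graft _ _ _ hy _ _ ih => exact Finset.insert_subset hy ih

theorem subset_arrows (h : Subtree Q S T) : T ⊆ Q.A := by
  induction h with
  | single => exact Finset.empty_subset _
  | graft _ ha _ _ _ _ ih => exact Finset.insert_subset ha ih

theorem nonempty (h : Subtree Q S T) : S.Nonempty := by
  cases h <;> simp

theorem ends_mem (h : Subtree Q S T) : ∀ a ∈ T, Q.src a ∈ S ∧ Q.tgt a ∈ S := by
  induction h with
  | single => simp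
  | graft _ _ hx _ _ hjoin ih =>
    refine (Finset.forall_mem_insert _ _ _).2 ⟨?_, fun b hb ↦ by simp [ih b hb]⟩
    obtain ⟨rfl, rfl⟩ | ⟨rfl, rfl⟩ := hjoin <;> simp [hx]

theorem ends_ne (h : Subtree Q S T) {y : ℕ} (hy : y ∉ S) : ∀ a ∈ T, Q.src a ≠ y ∧ Q.tgt a ≠ y :=
  fun a ha ↦ (h.ends_mem a ha).imp (ne_of_mem_of_not_mem · hy) (ne_of_mem_of_not_mem · hy)

theorem notMem_of_joins (h : Subtree Q S T) {a x y : ℕ} (hy : y ∉ S) (hjoin : Joins Q a x y) :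
    a ∉ T := fun ha ↦
  hjoin.elim (fun hxy ↦ (h.ends_ne hy a ha).2 hxy.2) (fun hyx ↦ (h.ends_ne hy a ha).1 hyx.1)

theorem card_eq (h : Subtree Q S T) : S.card = T.card + 1 := by
  induction h with
  | single => simp
  | graft h _ _ _ hy hjoin ih =>
    rw [Finset.card_insert_of_notMem hy, Finset.card_insert_of_notMem (h.notMem_of_joins hy hjoin),
      ih]

end Subtree

theorem exists_joins_of_ssubset (hconn : Connected Q) (hS : S ⊂ Q.V) (hne : S.Nonempty) :
    ∃ a ∈ Q.A, ∃ x ∈ S, ∃ y ∉ S, Joins Q a x y := by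
  obtain ⟨x, hx⟩ := hne
  obtain ⟨y, hy, hyS⟩ := Finset.exists_of_ssubset hS
  by_contra! hno
  have hclosed (z : ℕ) (hz : Relation.ReflTransGen (Adj Q) x z) : z ∈ S := by
    induction hz with
    | refl => exact hx
    | tail _ hadj ih =>
      obtain ⟨a, ha, hjoin⟩ := hadj
      by_contra hz
      exact hno a ha _ ih _ hz hjoin
  exact hyS (hclosed y (hconn x (hS.1 hx) y hy))

theorem exists_subtree_card_eq (hQ : IsWellFormed Q) (hconn : Connected Q) {n : ℕ}
    (hn : n + 1 ≤ Q.V.card) : ∃ S T, Subtree Q S T ∧ S.card = n + 1 := by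
  induction n with
  | zero =>
    obtain ⟨x, hx⟩ := Finset.card_pos.1 hn
    exact ⟨_, _, .single hx, Finset.card_singleton x⟩
  | succ n ih =>
    obtain ⟨S, T, h, hcard⟩ := ih (by omega)
    have hS : S ⊂ Q.V := h.subset_vertices.ssubset_of_ne (by rintro rfl; omega)
    obtain ⟨a, ha, x, hx, y, hy, hjoin⟩ := exists_joins_of_ssubset hconn hS h.nonempty
    have hyV : y ∈ Q.V := hjoin.elim (fun h ↦ h.2 ▸ hQ.tgt_mem a ha) fun h ↦ h.1 ▸ hQ.src_mem a ha
    exact ⟨_, _, .graft h ha hx hyV hy hjoin, by rw [Finset.card_insert_of_notMem hy, hcard]⟩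

theorem TreeType.subtree (ht : TreeType Q) (hQ : IsWellFormed Q) (hconn : Connected Q) :
    Subtree Q Q.V Q.A := by
  obtain ⟨S, T, h, hcard⟩ := exists_subtree_card_eq hQ hconn ht.ge
  have hT := h.card_eq
  rw [← Finset.eq_of_subset_of_card_le h.subset_vertices (ht.trans hcard.symm).le,
    ← Finset.eq_of_subset_of_card_le h.subset_arrows (by omega)]
  exact h

theorem Subtree.exists_isWalk_isCycleOn (h : Subtree Q S T) (st : SigmaTau Q) :
    ∃ π, IsWalk st T π ∧ π.IsCycleOn (states S) := by
  induction h with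
  | single =>
    have hturn : IsWalk st ∅ turn := isWalk_turn
    exact ⟨turn, hturn, hturn.isCycleOn_states_singleton (by simp)⟩
  | @graft S T a x y h ha hx hyV hy hjoin ih =>
    obtain ⟨π, hπ, hS⟩ := ih
    have hleaf : π.IsCycleOn (states {y}) := hπ.isCycleOn_states_singleton (h.ends_ne hy)
    have hdisj : Disjoint (states S) (states {y}) := by
      rw [Finset.disjoint_left]
      intro v hv hv'
      rw [mem_states, mem_sides] at hv hv'
      exact hy (Finset.mem_singleton.1 hv'.1 ▸ hv.1)
    have hunion : states (insert y S) = states S ∪ states {y} := by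
      ext v
      simp only [Finset.mem_union, mem_states, mem_sides, Finset.mem_insert, Finset.mem_singleton]
      tauto
    refine ⟨_, hπ.insert (h.notMem_of_joins hy hjoin) (Finset.insert_subset ha h.subset_arrows),
      hunion ▸ ?_⟩
    obtain ⟨rfl, rfl⟩ | ⟨rfl, rfl⟩ := hjoin
    · exact isCycleOn_mul_swap hS hleaf hdisj (by simpa [mem_states, tail_mem_sides st ha])
        (by simp [mem_states, head_mem_sides st ha])
    · rw [Finset.union_comm]
      exact isCycleOn_mul_swap hleaf hS hdisj.symm (by simp [mem_states, tail_mem_sides st ha])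
        (by simpa [mem_states, head_mem_sides st ha])

theorem TreeType.exists_isWalk_isCycleOn (ht : TreeType Q) (hQ : IsWellFormed Q)
    (hconn : Connected Q) (st : SigmaTau Q) :
    ∃ π, IsWalk st Q.A π ∧ π.IsCycleOn (states Q.V) :=
  (ht.subtree hQ hconn).exists_isWalk_isCycleOn st

end Tree

section Single

variable {Q : QuivRel} {st : SigmaTau Q} {π : Equiv.Perm State}

theorem not_inC_of_isCycleOn (hQ : IsWellFormed Q) (hπ : IsWalk st Q.A π)
    (hcyc : π.IsCycleOn (states Q.V)) (a : ℕ) : ¬ InC Q st a := by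
  intro ha
  have hmaps : Set.MapsTo π {v | ∃ c, InC Q st c ∧ v = (st.head c, false)}
      {v | ∃ c, InC Q st c ∧ v = (st.head c, false)} := by
    rintro _ ⟨c, hc, rfl⟩
    obtain ⟨b, hb, hcb⟩ := exists_inC_zeroRel hQ hc
    exact ⟨b, hb, by rw [hπ.apply_head c hc.1, ((zeroRel_iff st hQ).1 hcb).2.2]⟩
  have mem_states_head (φ : Bool) : (st.head a, φ) ∈ states Q.V :=
    mem_states.2 ((head_mem_sides st ha.1).2 (hQ.tgt_mem a ha.1))
  obtain ⟨c, -, heq⟩ :=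
    coe_subset_of_isCycleOn hcyc hmaps (mem_states_head false) ⟨a, ha, rfl⟩ (mem_states_head true)
  simp at heq

end Single

section Traversal

variable {Q : QuivRel} {st : SigmaTau Q} {π : Equiv.Perm State} {u v : Side} {w w' : Thread}

/-- A step of the boundary walk in its path phase, along an arrow. -/
def PathStep (st : SigmaTau Q) (u v : Side) : Prop :=
  ∃ a ∈ Q.A, u = st.tail a ∧ v = (st.head a).opp

/-- A step of the boundary walk in its antipath phase, backwards along an arrow. -/
def AntiStep (st : SigmaTau Q) (u v : Side) : Prop :=
  ∃ a ∈ Q.A, u = st.head a ∧ v = st.tail a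

/-- Prepends an arrow to a thread. -/
def Thread.cons (a : ℕ) : Thread → Thread
  | .triv _ _ => .arrows [a]
  | .arrows l => .arrows (a :: l)

theorem isPathThread_cons (hw : IsPathThread Q w) {a : ℕ} (ha : a ∈ Q.A)
    (hwa : w.endPath st = (st.tail a).opp) :
    IsPathThread Q (w.cons a) ∧ (w.cons a).start st = w.start st := by
  obtain ⟨hv, hε⟩ := Prod.ext_iff.1 hwa
  obtain ⟨x, ε⟩ | l := w
  · refine ⟨⟨⟨by simp, by simpa using ha, .singleton a⟩, .singleton a⟩, ?_⟩
    exact Prod.ext hv.symm (neg_injective hε).symm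
  · obtain ⟨b, l, rfl⟩ := List.exists_cons_of_ne_nil hw.1.1
    have hba : Q.src a = Q.tgt b := hv.symm
    have hsign : st.τ b = -st.σ a := hε
    have hrel : (a, b) ∉ Q.rel := by
      have hb : b ∈ Q.A := hw.1.2.1 b (by simp)
      have := st.σ_pm a ha
      rw [st.rel_iff a ha b hb hba]
      omega
    exact ⟨⟨⟨by simp, List.forall_mem_cons.2 ⟨ha, hw.1.2.1⟩, hw.1.2.2.cons_cons hba⟩,
      hw.2.cons_cons hrel⟩, by simp [Thread.cons, Thread.start, Thread.source, Thread.sigma]⟩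

theorem isAntiThread_cons (hw : IsAntiThread Q w) {a : ℕ} (ha : a ∈ Q.A)
    (hwa : w.endAnti st = st.tail a) :
    IsAntiThread Q (w.cons a) ∧ (w.cons a).start st = w.start st := by
  obtain ⟨hv, hε⟩ := Prod.ext_iff.1 hwa
  obtain ⟨x, ε⟩ | l := w
  · exact ⟨⟨by simp, by simpa using ha, .singleton a⟩, hwa.symm⟩
  · obtain ⟨b, l, rfl⟩ := List.exists_cons_of_ne_nil hw.1
    have hrel : (a, b) ∈ Q.rel := (st.rel_iff a ha b (hw.2.1 b (by simp)) hv.symm).2 hε.symm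
    exact ⟨⟨by simp, List.forall_mem_cons.2 ⟨ha, hw.2.1⟩, hw.2.2.cons_cons hrel⟩,
      by simp [Thread.cons, Thread.start, Thread.source, Thread.sigma]⟩

theorem endPath_cons (w : Thread) (a : ℕ) : (w.cons a).endPath st = st.head a := by
  cases w <;> rfl

theorem endAnti_cons (w : Thread) (a : ℕ) : (w.cons a).endAnti st = st.head a := by
  cases w <;> rfl

theorem exists_isPathThread (hu : u ∈ sides Q.V)
    (h : Relation.ReflTransGen (PathStep st) u v) :
    ∃ m, IsPathThread Q m ∧ m.start st = u ∧ m.endPath st = v.opp := by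
  induction h with
  | refl => exact ⟨.triv u.1 u.2, mem_sides.1 hu, rfl, rfl⟩
  | tail _ hstep ih =>
    obtain ⟨m, hm, hstart, hend⟩ := ih
    obtain ⟨a, ha, rfl, rfl⟩ := hstep
    obtain ⟨hcons, hstart_cons⟩ := isPathThread_cons hm ha hend
    exact ⟨m.cons a, hcons, hstart_cons.trans hstart, by rw [endPath_cons, Side.opp_opp]⟩

theorem exists_isAntiThread (hu : u ∈ sides Q.V)
    (h : Relation.ReflTransGen (AntiStep st) v u) :
    ∃ w, IsAntiThread Q w ∧ w.start st = u ∧ w.endAnti st = v := by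
  induction h using Relation.ReflTransGen.head_induction_on with
  | refl => exact ⟨.triv u.1 u.2, mem_sides.1 hu, rfl, rfl⟩
  | head hstep _ ih =>
    obtain ⟨w, hw, hstart, hend⟩ := ih
    obtain ⟨a, ha, rfl, rfl⟩ := hstep
    obtain ⟨hcons, hstart_cons⟩ := isAntiThread_cons hw ha hend
    exact ⟨w.cons a, hcons, hstart_cons.trans hstart, endAnti_cons w a⟩

/-- The states passed by the boundary walk after leaving `ω ∈ 𝒩` at its start: those on the path
`ψω`, followed by those on the antipath `Φω`, read backwards. -/
def Traverses (st : SigmaTau Q) (w : Thread) : State → Prop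
  | (u, true) => Relation.ReflTransGen (PathStep st) (w.start st).opp u
  | (u, false) => ∃ v, Relation.ReflTransGen (PathStep st) (w.start st).opp v ∧
      v ∉ Q.A.image st.tail ∧ Relation.ReflTransGen (AntiStep st) v u

protected theorem Traverses.mem_states (hQ : IsWellFormed Q) (hw : InN Q st w) {x : State}
    (h : Traverses st w x) : x ∈ states Q.V := by
  have mem_of_pathSteps {v : Side} (hv : Relation.ReflTransGen (PathStep st) (w.start st).opp v) :
      v ∈ sides Q.V := by
    obtain rfl | ⟨_, _, a, ha, -, rfl⟩ := hv.cases_tail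
    · exact opp_mem_sides.2 (start_mem_sides hQ hw.1)
    · exact opp_mem_sides.2 ((head_mem_sides st ha).2 (hQ.tgt_mem a ha))
  rw [mem_states]
  obtain ⟨u, _ | _⟩ := x
  · obtain ⟨v, hv, -, hu⟩ := h
    obtain rfl | ⟨_, _, a, ha, -, rfl⟩ := hu.cases_tail
    · exact mem_of_pathSteps hv
    · exact (tail_mem_sides st ha).2 (hQ.src_mem a ha)
  · exact mem_of_pathSteps h

theorem Traverses.exists_phiRel (hQ : IsWellFormed Q) (hw : InN Q st w)
    (h : Traverses st w (u, false)) (hu : u ∉ Q.A.image st.head) :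
    ∃ w', PhiRel Q st w w' ∧ w'.start st = u := by
  have huV : u ∈ sides Q.V := mem_states.1 (h.mem_states hQ hw)
  obtain ⟨v, hpath, hv, hanti⟩ := h
  obtain ⟨m, hm, hm_start, hm_end⟩ :=
    exists_isPathThread (opp_mem_sides.2 (start_mem_sides hQ hw.1)) hpath
  obtain ⟨w', hw', rfl, hw'_end⟩ := exists_isAntiThread huV hanti
  have hmM : InM Q st m := (inM_iff st).2 ⟨hm, by rwa [hm_end, Side.opp_opp],
    by rw [hm_start, Side.opp_opp]; exact ((inN_iff st).1 hw).2.2⟩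
  have hw'N : InN Q st w' := (inN_iff st).2 ⟨hw', hw'_end ▸ hv, hu⟩
  exact ⟨w', (phiRel_iff st).2 ⟨hw, hw'N, m, hmM, hm_start,
    by rw [hw'_end, hm_end, Side.opp_opp]⟩, rfl⟩

theorem mapsTo_traverses (hQ : IsWellFormed Q) (hπ : IsWalk st Q.A π) (w : Thread) :
    let X := {x | ∃ w', Relation.EqvGen (PhiRel Q st) w w' ∧ InN Q st w' ∧ Traverses st w' x}
    Set.MapsTo π X X := by
  rintro _ ⟨u, _ | _⟩ ⟨w', hw', hN, h⟩
  · by_cases hu : u ∈ Q.A.image st.head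
    · obtain ⟨a, ha, rfl⟩ := Finset.mem_image.1 hu
      obtain ⟨v, hpath, hv, hanti⟩ := h
      rw [hπ.apply_head a ha]
      exact ⟨w', hw', hN, v, hpath, hv, hanti.tail ⟨a, ha, rfl, rfl⟩⟩
    · obtain ⟨w'', hphi, rfl⟩ := h.exists_phiRel hQ hN hu
      rw [hπ.apply_false _ hu]
      exact ⟨w'', hw'.trans _ _ _ (.rel _ _ hphi), hphi.2.1, .refl⟩
  · by_cases hu : u ∈ Q.A.image st.tail
    · obtain ⟨a, ha, rfl⟩ := Finset.mem_image.1 hu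
      rw [hπ.apply_tail a ha]
      exact ⟨w', hw', hN, Relation.ReflTransGen.tail h ⟨a, ha, rfl, rfl⟩⟩
    · rw [hπ.apply_true u hu]
      exact ⟨w', hw', hN, u, h, hu, .refl⟩

theorem eqvGen_phiRel_of_isCycleOn (hQ : IsWellFormed Q) (hπ : IsWalk st Q.A π)
    (hcyc : π.IsCycleOn (states Q.V)) (hw : InN Q st w) (hw' : InN Q st w') :
    Relation.EqvGen (PhiRel Q st) w w' := by
  have leave_mem {x : Thread} (hx : InN Q st x) : ((x.start st).opp, true) ∈ states Q.V :=
    mem_states.2 (opp_mem_sides.2 (start_mem_sides hQ hx.1))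
  obtain ⟨x, hwx, hx, hpath⟩ := coe_subset_of_isCycleOn hcyc (mapsTo_traverses hQ hπ w)
    (leave_mem hw) ⟨w, .refl w, hw, .refl⟩ (leave_mem hw')
  obtain hstart | ⟨_, _, a, ha, -, hhead⟩ := Relation.ReflTransGen.cases_tail hpath
  · exact start_injOn hQ hx hw' (Side.opp_injective hstart.symm) ▸ hwx
  · have hN := ((inN_iff st).1 hw').2.2
    exact absurd (Finset.mem_image.2 ⟨a, ha, (Side.opp_injective hhead).symm⟩) hN

end Traversal

section Invariant

variable {Q : QuivRel} {st : SigmaTau Q}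

theorem NOrbit.subset {O : Set Thread} (hO : NOrbit Q st O) : O ⊆ {w | InN Q st w} := by
  obtain ⟨w, hw, rfl⟩ := hO
  exact fun w' h ↦ (iff_of_eqvGen (fun _ _ hr ↦ ⟨hr.1, hr.2.1⟩) h).1 hw

theorem COrbit.subset {O : Set ℕ} (hO : COrbit Q st O) : O ⊆ Q.A := by
  obtain ⟨a, ha, rfl⟩ := hO
  exact fun b h ↦ ((iff_of_eqvGen (fun _ _ hr ↦ ⟨hr.1, hr.2.1⟩) h).1 ha).1

theorem nOrbit_setOf_inN (hne : {w | InN Q st w}.Nonempty)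
    (h : ∀ w w', InN Q st w → InN Q st w' → Relation.EqvGen (PhiRel Q st) w w') :
    NOrbit Q st {w | InN Q st w} := by
  obtain ⟨w, hw⟩ := hne
  have horbit : NOrbit Q st {w' | Relation.EqvGen (PhiRel Q st) w w'} := ⟨w, hw, rfl⟩
  exact ⟨w, hw, Set.Subset.antisymm (fun w' hw' ↦ h w w' hw hw') horbit.subset⟩

theorem setOf_nOrbit_eq_singleton_iff {O : Set Thread} :
    {O' | NOrbit Q st O'} = {O} ↔ O = {w | InN Q st w} ∧ NOrbit Q st {w | InN Q st w} := by
  constructor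
  · intro h
    have hO : NOrbit Q st O := h.ge rfl
    have hall : O = {w | InN Q st w} := hO.subset.antisymm fun w hw ↦ by
      have hclass : {w' | Relation.EqvGen (PhiRel Q st) w w'} = O := h.le ⟨w, hw, rfl⟩
      exact hclass ▸ .refl w
    exact ⟨hall, hall ▸ hO⟩
  · rintro ⟨rfl, hN⟩
    refine Set.eq_singleton_iff_unique_mem.2 ⟨hN, fun O hO ↦ hO.subset.antisymm ?_⟩
    obtain ⟨w, -, hN⟩ := hN
    obtain ⟨w', hw', rfl⟩ := hO
    have connected {x : Thread} (hx : InN Q st x) : Relation.EqvGen (PhiRel Q st) w x := hN.le hx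
    exact fun x hx ↦ (connected hw').symm.trans _ _ _ (connected hx)

theorem finite_setOf_nOrbit (hQ : IsWellFormed Q) : {O | NOrbit Q st O}.Finite :=
  (finite_setOf_inN hQ).finite_subsets.subset fun _ hO ↦ hO.subset

theorem finite_setOf_cOrbit : {O | COrbit Q st O}.Finite :=
  Q.A.finite_toSet.finite_subsets.subset fun _ hO ↦ hO.subset

theorem forall_not_inC_of_fInv {p q : ℕ} (hp : p ≠ 0)
    (h : ∀ x, fInv Q st x = charFn p q x) (a : ℕ) : ¬ InC Q st a := by
  intro ha
  have hzero := h (0, {b | Relation.EqvGen (PsiRel Q st) a b}.ncard)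
  rw [charFn, if_neg (by simp [hp.symm]), fInv, Nat.add_eq_zero_iff] at hzero
  have hempty := (Set.ncard_eq_zero (finite_setOf_cOrbit.subset fun _ hO ↦ hO.1)).1 hzero.2
  exact hempty.le ⟨⟨a, ha, rfl⟩, rfl, rfl⟩

theorem fInv_of_forall_not_inC (hC : ∀ a, ¬ InC Q st a) (x : ℕ × ℕ) :
    fInv Q st x = {O ∈ {O | NOrbit Q st O} | (pN O, qN O) = x}.ncard := by
  have hempty : {O | COrbit Q st O ∧ x.1 = 0 ∧ O.ncard = x.2} = ∅ :=
    Set.eq_empty_of_forall_notMem fun O ⟨⟨a, ha, _⟩, _⟩ ↦ hC a ha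
  rw [fInv, hempty, Set.ncard_empty, add_zero]
  simp only [Set.mem_ofPred_eq, Prod.ext_iff]

theorem forall_fInv_eq_charFn_iff (hQ : IsWellFormed Q) {p q : ℕ} (hp : p ≠ 0) :
    (∀ x, fInv Q st x = charFn p q x) ↔ (∀ a, ¬ InC Q st a) ∧ NOrbit Q st {w | InN Q st w} ∧
      pN {w | InN Q st w} = p ∧ qN {w | InN Q st w} = q := by
  rw [← and_iff_right_of_imp (forall_not_inC_of_fInv hp), and_congr_right_iff]
  intro hC
  simp only [fInv_of_forall_not_inC hC, charFn]
  rw [forall_ncard_fiber_eq_ite_iff (finite_setOf_nOrbit hQ)]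
  simp only [setOf_nOrbit_eq_singleton_iff, Prod.mk.injEq, and_assoc, exists_eq_left]

end Invariant

theorem stmt1_general (Q : QuivRel) (hQ : IsWellFormed Q) (hconn : Connected Q)
    (st : SigmaTau Q) :
    TreeType Q ↔ ∃ p : ℕ, ∀ x, fInv Q st x = charFn (p + 2) p x := by
  have hpN : pN {w | InN Q st w} + Q.A.card = 2 * Q.V.card := pN_setOf_inN_add_card hQ
  have hqN : qN {w | InN Q st w} + {a | InC Q st a}.ncard = Q.A.card :=
    qN_setOf_inN_add_ncard hQ
  simp only [forall_fInv_eq_charFn_iff hQ (Nat.succ_ne_zero _)]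
  constructor
  · intro htree
    obtain ⟨π, hπ, hcyc⟩ := htree.exists_isWalk_isCycleOn hQ hconn st
    have hC : ∀ a, ¬ InC Q st a := not_inC_of_isCycleOn hQ hπ hcyc
    simp only [hC, Set.ofPred_false, Set.ncard_empty] at hqN
    have hp : pN {w | InN Q st w} = qN {w | InN Q st w} + 2 := by
      unfold TreeType at htree
      omega
    have hne : {w | InN Q st w}.Nonempty :=
      Set.nonempty_of_ncard_ne_zero (hp.trans_ne (Nat.succ_ne_zero _))
    exact ⟨_, hC, nOrbit_setOf_inN hne fun _ _ ↦ eqvGen_phiRel_of_isCycleOn hQ hπ hcyc, hp, rfl⟩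
  · rintro ⟨p, hC, -, hp, hq⟩
    simp only [hC, Set.ofPred_false, Set.ncard_empty] at hqN
    unfold TreeType
    omega

/-- A gentle quiver `𝚫` is of tree type iff
`f_𝚫 = [p+2, p]` for some `p ∈ ℕ`. -/
theorem stmt1 (Q : QuivRel) (hQ : IsGentle Q) (st : SigmaTau Q) :
    TreeType Q ↔ ∃ p : ℕ, ∀ x, fInv Q st x = charFn (p + 2) p x :=
  stmt1_general Q hQ.isWellFormed hQ.2.2.1 st

end GentleQuiv
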